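/- (MMSE representation, Corollary 1.) In the exponential-family setup of the context with k = d, assume the domination hypothesis of Proposition 1 (so that F(y) := E[X|Y=y] is differentiable with J_y F(y) = (J_y T(y)) Var(X|Y=y)), assume the d×d matrix J_y T(y) is invertible for every y ∈ 𝒴, that the joint law of (X,Y) has density f(y|x) with respect to μ ⊗ Lebesgue restricted to ℝ^d × 𝒴, and that y ↦ ‖Var(X|Y=y)‖ f_Y(y) is Lebesgue-integrable on 𝒴. Then the MMSE matrix satisfies ∫_𝒴 ∫_{ℝ^d} (x − F(y))(x − F(y))ᵀ f(y|x) dμ(x) dy = ∫_𝒴 (J_y T(y))^{-1} (J_y F(y)) f_Y(y) dy, where (J_y T(y))_{j,l} = ∂T_l/∂y_j and (J_y F(y))_{j,i} = ∂F_i/∂y_j. -/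

import Mathlib

open MeasureTheory

theorem abs_exp_sub_exp_le_aux (a b : ℝ) :
    |Real.exp a - Real.exp b| ≤ |a - b| * (Real.exp a + Real.exp b) := by
  have key : ∀ u v : ℝ, Real.exp u - Real.exp v ≤ |u - v| * (Real.exp u + Real.exp v) := by
    intro u v
    have h1 : v - u + 1 ≤ Real.exp (v - u) := Real.add_one_le_exp _
    have h2 : Real.exp v = Real.exp u * Real.exp (v - u) := by
      rw [← Real.exp_add]; congr 1; ring
    have hu := Real.exp_pos u
    have hv := Real.exp_pos v
    have h3 : Real.exp u - Real.exp v ≤ Real.exp u * (u - v) := by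
      rw [h2]; nlinarith
    have h4 : Real.exp u * (u - v) ≤ Real.exp u * |u - v| :=
      mul_le_mul_of_nonneg_left (le_abs_self _) hu.le
    have h5 : 0 ≤ |u - v| * Real.exp v := by positivity
    nlinarith
  rw [abs_le]
  constructor
  · have := key b a
    rw [abs_sub_comm] at this
    nlinarith
  · exact key a b

theorem diff_aux {d : ℕ} (μ : Measure (Fin d → ℝ))
    (T : (Fin d → ℝ) → (Fin d → ℝ)) (y : Fin d → ℝ)
    (D : (Fin d → ℝ) →L[ℝ] (Fin d → ℝ)) (hT : HasFDerivAt T D y)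
    (φ : (Fin d → ℝ) → ℝ) (hφ : Measurable φ)
    (N : Set (Fin d → ℝ)) (hN : N ∈ nhds y) (ψ : (Fin d → ℝ) → ℝ) (hψ : Integrable ψ μ)
    (hb : ∀ y' ∈ N, ∀ x,
        (1 + ‖x‖) ^ 2 * Real.exp ((∑ l, x l * T y' l) - φ x) ≤ ψ x)
    (v : (Fin d → ℝ) → ℝ) (hv : Measurable v) (hvb : ∀ x, |v x| ≤ 1 + ‖x‖) :
    ∃ A : (Fin d → ℝ) →L[ℝ] ℝ,
      HasFDerivAt (fun y' => ∫ x, v x * Real.exp ((∑ l, x l * T y' l) - φ x) ∂μ) A y ∧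
      ∀ w, A w = ∑ l, D w l * ∫ x, x l * v x * Real.exp ((∑ l, x l * T y l) - φ x) ∂μ := by
  have hmE : ∀ y', Measurable (fun x : Fin d → ℝ => Real.exp ((∑ l, x l * T y' l) - φ x)) := by
    intro y'; fun_prop
  have hyN : y ∈ N := mem_of_mem_nhds hN
  -- integrability of second order terms
  have hint : ∀ w : (Fin d → ℝ) → ℝ, Measurable w → (∀ x, |w x| ≤ (1 + ‖x‖) ^ 2) →
      Integrable (fun x => w x * Real.exp ((∑ l, x l * T y l) - φ x)) μ := by
    intro w hw hwb
    refine hψ.mono' (hw.mul (hmE y)).aestronglyMeasurable (Filter.Eventually.of_forall fun x => ?_)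
    rw [Real.norm_eq_abs, abs_mul, abs_of_pos (Real.exp_pos _)]
    exact (mul_le_mul_of_nonneg_right (hwb x) (Real.exp_pos _).le).trans (hb y hyN x)
  have hxl : ∀ (x : Fin d → ℝ) l, |x l| ≤ ‖x‖ := fun x l => norm_le_pi_norm x l
  have hint1 : ∀ l, Integrable (fun x => x l * v x * Real.exp ((∑ l, x l * T y l) - φ x)) μ := by
    intro l
    refine hint (fun x => x l * v x) (by fun_prop) fun x => ?_
    rw [abs_mul, sq]
    exact mul_le_mul ((hxl x l).trans (by linarith)) (hvb x) (abs_nonneg _) (by positivity)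
  -- local Lipschitz bound for T
  obtain ⟨C, hC0, hC⟩ : ∃ C : ℝ, 0 ≤ C ∧ ∀ᶠ y' in nhds y, ‖T y' - T y‖ ≤ C * ‖y' - y‖ := by
    obtain ⟨C, hC0, hC⟩ := hT.isBigO_sub.exists_nonneg
    exact ⟨C, hC0, hC.bound⟩
  let P : Fin d → ((Fin d → ℝ) →L[ℝ] ℝ) := fun l =>
    (ContinuousLinearMap.proj (R := ℝ) (φ := fun _ : Fin d => ℝ) l).comp D
  let G' : (Fin d → ℝ) → ((Fin d → ℝ) →L[ℝ] ℝ) := fun x =>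
    ∑ l, (x l * v x * Real.exp ((∑ l, x l * T y l) - φ x)) • P l
  have hG'int : Integrable G' μ := integrable_finsetSum _ fun l _ => (hint1 l).smul_const (P l)
  have hs : N ∩ {y' | ‖T y' - T y‖ ≤ C * ‖y' - y‖} ∈ nhds y := Filter.inter_mem hN hC
  have main := hasFDerivAt_integral_of_dominated_loc_of_lip' (μ := μ) (𝕜 := ℝ)
    (F := fun y' x => v x * Real.exp ((∑ l, x l * T y' l) - φ x)) (F' := G') (x₀ := y)
    (bound := fun x => (d * C * 2) * ψ x) hs
    (fun y' _ => (hv.mul (hmE y')).aestronglyMeasurable)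
    (hint v hv fun x => (hvb x).trans (by nlinarith [norm_nonneg x]))
    hG'int.aestronglyMeasurable
    (Filter.Eventually.of_forall fun x y' hy' => ?_)
    (hψ.const_mul _)
    (Filter.Eventually.of_forall fun x => ?_)
  · refine ⟨_, main.2, fun w => ?_⟩
    rw [ContinuousLinearMap.integral_apply hG'int]
    simp only [G', P, ContinuousLinearMap.sum_apply, ContinuousLinearMap.smul_apply,
      ContinuousLinearMap.comp_apply, ContinuousLinearMap.proj_apply, smul_eq_mul]
    rw [integral_finsetSum _ fun l _ => (hint1 l).mul_const _]
    refine Finset.sum_congr rfl fun l _ => ?_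
    rw [integral_mul_const, mul_comm]
  · obtain ⟨h1, h2⟩ := hy'
    simp only [Set.mem_setOf_eq] at h2
    have e1 := hb y' h1 x
    have e2 := hb y hyN x
    have e3 := abs_exp_sub_exp_le_aux ((∑ l, x l * T y' l) - φ x) ((∑ l, x l * T y l) - φ x)
    set E' := Real.exp ((∑ l, x l * T y' l) - φ x)
    set E := Real.exp ((∑ l, x l * T y l) - φ x)
    have hE' : 0 < E' := Real.exp_pos _
    have hE : 0 < E := Real.exp_pos _
    have e4 : |((∑ l, x l * T y' l) - φ x) - ((∑ l, x l * T y l) - φ x)|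
        ≤ d * (1 + ‖x‖) * (C * ‖y' - y‖) := by
      have : ((∑ l, x l * T y' l) - φ x) - ((∑ l, x l * T y l) - φ x)
          = ∑ l, x l * (T y' - T y) l := by
        simp only [Pi.sub_apply, mul_sub, Finset.sum_sub_distrib]; ring
      rw [this]
      refine (Finset.abs_sum_le_sum_abs _ _).trans ?_
      have : ∀ l ∈ Finset.univ, |x l * (T y' - T y) l| ≤ (1 + ‖x‖) * (C * ‖y' - y‖) := by
        intro l _
        rw [abs_mul]
        exact mul_le_mul ((hxl x l).trans (by linarith)) ((hxl _ l).trans h2) (abs_nonneg _)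
          (by positivity)
      refine (Finset.sum_le_sum this).trans ?_
      simp [mul_assoc]
    rw [← mul_sub, Real.norm_eq_abs, abs_mul]
    calc |v x| * |E' - E| ≤ (1 + ‖x‖) * ((d * (1 + ‖x‖) * (C * ‖y' - y‖)) * (E' + E)) := by
          refine mul_le_mul (hvb x) (e3.trans ?_) (abs_nonneg _) (by positivity)
          exact mul_le_mul_of_nonneg_right e4 (by positivity)
      _ = (d * C * ‖y' - y‖) * ((1 + ‖x‖) ^ 2 * E' + (1 + ‖x‖) ^ 2 * E) := by ring
      _ ≤ (d * C * ‖y' - y‖) * (ψ x + ψ x) :=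
          mul_le_mul_of_nonneg_left (add_le_add e1 e2) (by positivity)
      _ = _ := by ring
  · have hTl : ∀ l, HasFDerivAt (fun y' => T y' l) (P l) y := fun l => by
      simpa [P] using (hasFDerivAt_pi'.1 hT) l
    have := (((HasFDerivAt.fun_sum (u := Finset.univ)
      fun l _ => (hTl l).const_mul (x l)).sub_const (φ x)).exp).const_mul (v x)
    refine this.congr_fderiv ?_
    simp only [G', Finset.smul_sum, smul_smul]
    refine Finset.sum_congr rfl fun l _ => ?_
    congr 1
    ring

/-- MMSE representation (Corollary 1):
`MMSE(X|Y) = E[(J_Y T(Y))⁻¹ J_Y E[X|Y]]`, stated entrywise. -/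
theorem stmt_4
    {d : ℕ}
    (μ : Measure (Fin d → ℝ)) [IsProbabilityMeasure μ]
    (𝒴 : Set (Fin d → ℝ)) (h𝒴 : IsOpen 𝒴)
    (h : (Fin d → ℝ) → ℝ)
    (hhpos : ∀ y ∈ 𝒴, 0 < h y)
    (hhdiff : ∀ y ∈ 𝒴, DifferentiableAt ℝ h y)
    (T : (Fin d → ℝ) → (Fin d → ℝ))
    (T' : (Fin d → ℝ) → ((Fin d → ℝ) →L[ℝ] (Fin d → ℝ)))
    (hT : ∀ y ∈ 𝒴, HasFDerivAt T (T' y) y)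
    (φ : (Fin d → ℝ) → ℝ) (hφ : Measurable φ)
    (f : (Fin d → ℝ) → (Fin d → ℝ) → ℝ)
    (hf : ∀ y x, f y x = h y * Real.exp ((∑ l, x l * T y l) - φ x))
    (fY : (Fin d → ℝ) → ℝ)
    (hfY : ∀ y, fY y = ∫ x, f y x ∂μ)
    (hfYpos : ∀ y ∈ 𝒴, 0 < fY y)
    (hfYfin : ∀ y ∈ 𝒴, Integrable (fun x => f y x) μ)
    (F : (Fin d → ℝ) → (Fin d → ℝ))
    (hF : ∀ y i, F y i = (∫ x, x i * f y x ∂μ) / fY y)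
    -- domination hypothesis of Proposition 1
    (hdom : ∀ y ∈ 𝒴, ∃ N ∈ nhds y, ∃ ψ : (Fin d → ℝ) → ℝ, Integrable ψ μ ∧
      ∀ y' ∈ N, ∀ x,
        (1 + ‖x‖) ^ 2 * Real.exp ((∑ l, x l * T y' l) - φ x) ≤ ψ x)
    -- Jacobian matrices of `T` and of `F`
    (JT JF : (Fin d → ℝ) → Matrix (Fin d) (Fin d) ℝ)
    (hJT : ∀ y j l, JT y j l = T' y (Pi.single j 1) l)
    (hJF : ∀ y j i, JF y j i = fderiv ℝ F y (Pi.single j 1) i)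
    -- invertibility of the Jacobian of the sufficient statistics
    (hinv : ∀ y ∈ 𝒴, IsUnit (JT y))
    -- the joint law of (X,Y) has density f(y|x) w.r.t. μ ⊗ Lebesgue on ℝ^d × 𝒴
    (hjoint : IntegrableOn fY 𝒴 volume ∧ ∫ y in 𝒴, fY y = 1)
    -- integrability of the posterior covariance against the marginal density
    (hVarInt : ∀ (l i : Fin d), IntegrableOn
      (fun y => |(∫ x, x l * x i * f y x ∂μ) / fY y
        - ((∫ x, x l * f y x ∂μ) / fY y) * ((∫ x, x i * f y x ∂μ) / fY y)| * fY y)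
      𝒴 volume) :
    ∀ (l i : Fin d),
      (∫ y in 𝒴, ∫ x, (x l - F y l) * (x i - F y i) * f y x ∂μ)
        = ∫ y in 𝒴, ((JT y)⁻¹ * JF y) l i * fY y := by
  intro l i
  refine setIntegral_congr_fun h𝒴.measurableSet fun y hy => ?_
  obtain ⟨N, hN, ψ, hψ, hb⟩ := hdom y hy
  let E : (Fin d → ℝ) → (Fin d → ℝ) → ℝ := fun y x => Real.exp ((∑ l, x l * T y l) - φ x)
  have hfE : ∀ y x, f y x = h y * E y x := hf
  let Z : (Fin d → ℝ) → ℝ := fun y => ∫ x, E y x ∂μ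
  let M : Fin d → (Fin d → ℝ) → ℝ := fun i y => ∫ x, x i * E y x ∂μ
  let Q : Fin d → Fin d → ℝ := fun l i => ∫ x, x l * x i * E y x ∂μ
  have hfYZ : ∀ y, fY y = h y * Z y := fun y => by
    rw [hfY]; simp only [hfE, Z, integral_const_mul]
  have hZ0 : ∀ y ∈ 𝒴, Z y ≠ 0 := fun y hy h0 => by
    have := hfYpos y hy
    rw [hfYZ, h0] at this; simp at this
  have hFM : ∀ y ∈ 𝒴, ∀ i, F y i = M i y / Z y := by
    intro y hy i
    rw [hF, hfYZ]
    have : ∫ x, x i * f y x ∂μ = h y * M i y := by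
      simp only [M, ← integral_const_mul]
      congr 1; ext x; rw [hfE]; ring
    rw [this, mul_div_mul_left _ _ (hhpos y hy).ne']
  have hxl : ∀ (x : Fin d → ℝ) l, |x l| ≤ ‖x‖ := fun x l => norm_le_pi_norm x l
  obtain ⟨AZ, hAZ, hAZ'⟩ := diff_aux μ T y (T' y) (hT y hy) φ hφ N hN ψ hψ hb (fun _ => 1)
    measurable_const (fun x => by simp)
  simp only [one_mul, mul_one] at hAZ hAZ'
  have hM := fun i : Fin d => diff_aux μ T y (T' y) (hT y hy) φ hφ N hN ψ hψ hb (fun x => x i)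
    (by fun_prop) (fun x => (hxl x i).trans (by linarith))
  choose AM hAM hAM' using hM
  have hZy := hZ0 y hy
  -- derivative of F
  let B : Fin d → ((Fin d → ℝ) →L[ℝ] ℝ) := fun i =>
    ((Z y) ^ 2)⁻¹ • (Z y • AM i - M i y • AZ)
  have hFi : ∀ i, HasFDerivAt (fun y' => F y' i) (B i) y := by
    intro i
    have h1 : HasFDerivAt (fun y' => M i y' / Z y') (B i) y := by
      have h2 : HasFDerivAt (fun y' => (Z y')⁻¹) ((-((Z y) ^ 2)⁻¹) • AZ) y :=
        (hasDerivAt_inv hZy).comp_hasFDerivAt y hAZ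
      have h3 : HasFDerivAt (fun y' => M i y' * (Z y')⁻¹) _ y := (hAM i).mul h2
      simp only [div_eq_mul_inv]
      refine h3.congr_fderiv ?_
      ext w
      change M i y * (-((Z y) ^ 2)⁻¹ * AZ w) + (Z y)⁻¹ * AM i w
        = ((Z y) ^ 2)⁻¹ * (Z y * AM i w - M i y * AZ w)
      field_simp
      ring
    refine h1.congr_of_eventuallyEq ?_
    filter_upwards [h𝒴.mem_nhds hy] with y' hy'
    exact hFM y' hy' i
  have hFd : HasFDerivAt F (ContinuousLinearMap.pi B) y := hasFDerivAt_pi.2 hFi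
  let V : Matrix (Fin d) (Fin d) ℝ := fun l i => Q l i / Z y - M l y / Z y * (M i y / Z y)
  have hJ : JF y = JT y * V := by
    ext j i
    rw [hJF, hFd.fderiv, Matrix.mul_apply]
    simp only [ContinuousLinearMap.pi_apply, B, ContinuousLinearMap.smul_apply,
      ContinuousLinearMap.sub_apply, smul_eq_mul, hAM', hAZ', hJT]
    change ((Z y) ^ 2)⁻¹ * (Z y * (∑ l, T' y (Pi.single j 1) l * Q l i)
      - M i y * ∑ l, T' y (Pi.single j 1) l * M l y) = _
    rw [Finset.mul_sum, Finset.mul_sum, ← Finset.sum_sub_distrib, Finset.mul_sum]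
    refine Finset.sum_congr rfl fun l _ => ?_
    simp only [V]
    field_simp
  have hinvJ : (JT y)⁻¹ * JF y = V := by
    rw [hJ, ← Matrix.mul_assoc, Matrix.nonsing_inv_mul _ ((Matrix.isUnit_iff_isUnit_det _).1 (hinv y hy)),
      Matrix.one_mul]
  -- integrability
  have hint : ∀ w : (Fin d → ℝ) → ℝ, Measurable w → (∀ x, |w x| ≤ (1 + ‖x‖) ^ 2) →
      Integrable (fun x => w x * E y x) μ := by
    intro w hw hwb
    have hmE : Measurable (E y) := by simp only [E]; fun_prop
    refine hψ.mono' (hw.mul hmE).aestronglyMeasurable (Filter.Eventually.of_forall fun x => ?_)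
    rw [Real.norm_eq_abs, abs_mul, abs_of_pos (Real.exp_pos _)]
    exact (mul_le_mul_of_nonneg_right (hwb x) (Real.exp_pos _).le).trans
      (hb y (mem_of_mem_nhds hN) x)
  have i0 : Integrable (fun x => E y x) μ := by
    have := hint (fun _ => 1) measurable_const
      (fun x => by rw [abs_one]; nlinarith [norm_nonneg x])
    simpa using this
  have i1 : ∀ l, Integrable (fun x => x l * E y x) μ := fun l =>
    hint (fun x => x l) (by fun_prop) (fun x => (hxl x l).trans (by nlinarith [norm_nonneg x]))
  have i2 : Integrable (fun x => x l * x i * E y x) μ :=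
    hint (fun x => x l * x i) (by fun_prop) (fun x => by
      rw [abs_mul, sq]
      exact mul_le_mul ((hxl x l).trans (by linarith)) ((hxl x i).trans (by linarith))
        (abs_nonneg _) (by positivity))
  have hL : ∫ x, (x l - F y l) * (x i - F y i) * f y x ∂μ
      = h y * (Q l i - F y i * M l y - F y l * M i y + F y l * F y i * Z y) := by
    have : ∀ x, (x l - F y l) * (x i - F y i) * f y x
        = h y * (x l * x i * E y x - F y i * (x l * E y x) - F y l * (x i * E y x)
          + F y l * F y i * E y x) := fun x => by rw [hfE]; ring
    simp only [this]
    have j1 := (i1 l).const_mul (F y i)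
    have j2 := (i1 i).const_mul (F y l)
    have j3 := i0.const_mul (F y l * F y i)
    have k1 : Integrable (fun x => x l * x i * E y x - F y i * (x l * E y x)) μ := i2.sub j1
    have k2 : Integrable (fun x => x l * x i * E y x - F y i * (x l * E y x)
      - F y l * (x i * E y x)) μ := k1.sub j2
    rw [integral_const_mul, integral_add k2 j3, integral_sub k1 j2, integral_sub i2 j1,
      integral_const_mul, integral_const_mul, integral_const_mul]
  simp only [hinvJ]
  rw [hL, hFM y hy, hFM y hy, hfYZ]
  simp only [V]
  field_simp
  ring
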